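/- Let C ⊆ F_{q^m}^n be an arbitrary (not necessarily linear) code with at least two elements and let ρ be a nonnegative integer. (i) If ρ < d_R(C), then for every F_q-subspace L ⊆ F_q^n with dim_{F_q} L ≥ n − ρ and all c_1, c_2 ∈ C: c_1 − c_2 ∈ V_{L^⊥} implies c_1 = c_2 (that is, L is an information space for C). (ii) If d_R(C) ≤ ρ ≤ n, then there exist an F_q-subspace L ⊆ F_q^n with dim_{F_q} L = n − ρ and distinct c_1, c_2 ∈ C with c_1 − c_2 ∈ V_{L^⊥}. -/

import Mathlib

open Submodule Module

namespace RankPaper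

variable {n : ℕ}

/-- The coordinatewise `q^i`-th power map on `Fqm^n`. -/
def qpowMap (q i : ℕ) {Fqm : Type} [Field Fqm] (v : Fin n → Fqm) : Fin n → Fqm :=
  fun j => v j ^ q ^ i

/-- The Galois closure `D* = Σ_{i=0}^{m-1} D^{q^i}` of a subspace (as the span of the
union of the images of `D` under the coordinatewise `q^i`-power maps, `0 ≤ i < m`). -/
def galClosure (q m : ℕ) {Fqm : Type} [Field Fqm] (D : Submodule Fqm (Fin n → Fqm)) :
    Submodule Fqm (Fin n → Fqm) :=
  Submodule.span Fqm (⋃ i ∈ Finset.range m, qpowMap q i '' (D : Set (Fin n → Fqm)))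

/-- `D` is Galois closed if `D = D*`. -/
def GaloisClosed (q m : ℕ) {Fqm : Type} [Field Fqm] (D : Submodule Fqm (Fin n → Fqm)) : Prop :=
  galClosure q m D = D

/-- Rank weight of a subspace: `wt_R(D) = dim_{Fqm} D*`. -/
noncomputable def wtR (q m : ℕ) {Fqm : Type} [Field Fqm]
    (D : Submodule Fqm (Fin n → Fqm)) : ℕ :=
  finrank Fqm (galClosure q m D)

/-- Rank weight of a vector: `wt_R(c) = wt_R(span {c})`. -/
noncomputable def wtRv (q m : ℕ) {Fqm : Type} [Field Fqm] (c : Fin n → Fqm) : ℕ :=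
  wtR q m (Submodule.span Fqm ({c} : Set (Fin n → Fqm)))

/-- Hamming weight of a subspace: the number of coordinates where some element is nonzero. -/
noncomputable def wtH {Fqm : Type} [Field Fqm] (D : Submodule Fqm (Fin n → Fqm)) : ℕ :=
  {i : Fin n | ∃ d ∈ D, d i ≠ 0}.ncard

/-- `r`-th generalized rank weight of a linear code. -/
noncomputable def dR (q m : ℕ) {Fqm : Type} [Field Fqm]
    (C : Submodule Fqm (Fin n → Fqm)) (r : ℕ) : ℕ :=
  sInf { dv | ∃ V : Submodule Fqm (Fin n → Fqm),
    GaloisClosed q m V ∧ r ≤ finrank Fqm ↥(C ⊓ V) ∧ dv = finrank Fqm ↥V }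

/-- `r`-th generalized Hamming weight of a linear code. -/
noncomputable def dH {Fqm : Type} [Field Fqm]
    (C : Submodule Fqm (Fin n → Fqm)) (r : ℕ) : ℕ :=
  sInf { w | ∃ D : Submodule Fqm (Fin n → Fqm), D ≤ C ∧ finrank Fqm ↥D = r ∧ w = wtH D }

/-- `r`-th relative generalized rank weight of a nested code pair. -/
noncomputable def MR (q m : ℕ) {Fqm : Type} [Field Fqm]
    (C₁ C₂ : Submodule Fqm (Fin n → Fqm)) (r : ℕ) : ℕ :=
  sInf { dv | ∃ V : Submodule Fqm (Fin n → Fqm), GaloisClosed q m V ∧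
    r ≤ finrank Fqm ↥(C₁ ⊓ V) - finrank Fqm ↥(C₂ ⊓ V) ∧ dv = finrank Fqm ↥V }

/-- Minimum rank distance of an arbitrary (possibly nonlinear) code. -/
noncomputable def dRset (q m : ℕ) {Fqm : Type} [Field Fqm] (C : Set (Fin n → Fqm)) : ℕ :=
  sInf { w | ∃ c₁ ∈ C, ∃ c₂ ∈ C, c₁ ≠ c₂ ∧ w = wtRv q m (c₁ - c₂) }

/-- The linear functional `x ↦ Σ_j x_j y_j` (dot product with `y`). -/
def dotLin {K : Type} [Field K] (y : Fin n → K) : (Fin n → K) →ₗ[K] K :=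
  ∑ j, y j • LinearMap.proj j

/-- Orthogonal complement of a subspace with respect to the standard bilinear form. -/
def perp {K : Type} [Field K] (L : Submodule K (Fin n → K)) : Submodule K (Fin n → K) :=
  ⨅ y ∈ L, LinearMap.ker (dotLin y)

/-- The coordinatewise inclusion `Fq^n → Fqm^n`. -/
def embFq (Fq Fqm : Type) [Field Fq] [Field Fqm] [Algebra Fq Fqm] :
    (Fin n → Fq) →ₗ[Fq] (Fin n → Fqm) :=
  LinearMap.pi fun j => (Algebra.linearMap Fq Fqm).comp (LinearMap.proj j)

/-- `V_L = L ⊗ Fqm`, the `Fqm`-span of `L ⊆ Fq^n` inside `Fqm^n`. -/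
def VL {Fq : Type} (Fqm : Type) [Field Fq] [Field Fqm] [Algebra Fq Fqm]
    (L : Submodule Fq (Fin n → Fq)) : Submodule Fqm (Fin n → Fqm) :=
  Submodule.span Fqm (embFq Fq Fqm '' (L : Set (Fin n → Fq)))

/-- Rank-punctured code `C^L`: the image of `C` in `Fqm^n / V_{L^⊥}`. -/
noncomputable def punct {Fq Fqm : Type} [Field Fq] [Field Fqm] [Algebra Fq Fqm]
    (L : Submodule Fq (Fin n → Fq)) (C : Submodule Fqm (Fin n → Fqm)) :
    Submodule Fqm ((Fin n → Fqm) ⧸ VL Fqm (perp L)) :=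
  Submodule.map (VL Fqm (perp L)).mkQ C


lemma mem_perp {K : Type} [Field K] (L : Submodule K (Fin n → K)) (x : Fin n → K) :
    x ∈ perp L ↔ ∀ y ∈ L, ∑ j, y j * x j = 0 := by
  simp [perp, dotLin, Submodule.mem_iInf]

lemma le_perp_perp {K : Type} [Field K] (L : Submodule K (Fin n → K)) : L ≤ perp (perp L) := by
  intro x hx
  rw [mem_perp]
  intro y hy
  rw [mem_perp] at hy
  rw [← hy x hx]
  exact Finset.sum_congr rfl fun j _ => mul_comm _ _

lemma perp_anti {K : Type} [Field K] {L M : Submodule K (Fin n → K)} (h : L ≤ M) :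
    perp M ≤ perp L := by
  intro x hx
  rw [mem_perp] at hx ⊢
  exact fun y hy => hx y (h hy)

lemma finrank_perp {K : Type} [Field K] (L : Submodule K (Fin n → K)) :
    finrank K (perp L) = n - finrank K L := by
  have hB : (Matrix.toBilin' (1 : Matrix (Fin n) (Fin n) K)).Nondegenerate :=
    LinearMap.BilinForm.nondegenerate_toBilin'_iff_det_ne_zero.mpr (by simp)
  have h : perp L = LinearMap.BilinForm.orthogonal
      (Matrix.toBilin' (1 : Matrix (Fin n) (Fin n) K)) L := by
    ext x
    rw [mem_perp, LinearMap.BilinForm.mem_orthogonal_iff]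
    refine forall₂_congr fun y _ => ?_
    rw [Matrix.toBilin'_apply']
    simp [dotProduct]
  rw [h, LinearMap.BilinForm.finrank_orthogonal hB]
  simp

lemma exists_sub {K : Type} [Field K] (P : Submodule K (Fin n → K)) (k : ℕ)
    (hk : k ≤ finrank K P) : ∃ L : Submodule K (Fin n → K), L ≤ P ∧ finrank K L = k := by
  obtain ⟨f, hf⟩ := exists_linearIndependent_of_le_finrank hk
  refine ⟨Submodule.map P.subtype (Submodule.span K (Set.range f)),
    Submodule.map_subtype_le _ _, ?_⟩
  rw [LinearEquiv.finrank_eq (Submodule.equivMapOfInjective P.subtype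
    P.injective_subtype _).symm, finrank_span_eq_card hf]
  simp

lemma finrank_VL {Fq Fqm : Type} [Field Fq] [Field Fqm] [Algebra Fq Fqm]
    (M : Submodule Fq (Fin n → Fq)) : finrank Fqm (VL Fqm M) = finrank Fq M := by
  let b := Module.finBasis Fq M
  have hb : LinearIndependent Fq (fun i => (b i : Fin n → Fq)) :=
    b.linearIndependent.map' M.subtype (Submodule.ker_subtype M)
  have hb2 : LinearIndependent Fqm (fun i => embFq Fq Fqm (b i : Fin n → Fq)) :=
    (linearIndependent_algebraMap_comp_iff (S := Fqm)).mpr hb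
  have hs : VL Fqm M = Submodule.span Fqm
      (Set.range (fun i => embFq Fq Fqm (b i : Fin n → Fq))) := by
    apply le_antisymm
    · apply Submodule.span_le.mpr
      rintro _ ⟨x, hx, rfl⟩
      have h1 : x = ∑ i, b.repr ⟨x, hx⟩ i • (b i : Fin n → Fq) := by
        have := congrArg (fun z : M => (z : Fin n → Fq)) (b.sum_repr ⟨x, hx⟩)
        simp only [Submodule.coe_sum, Submodule.coe_smul] at this
        exact this.symm
      rw [h1, map_sum]
      refine Submodule.sum_mem _ fun i _ => ?_
      rw [map_smul]
      exact Submodule.smul_of_tower_mem _ _ (Submodule.subset_span ⟨i, rfl⟩)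
    · apply Submodule.span_mono
      rintro _ ⟨i, rfl⟩
      exact ⟨_, (b i).2, rfl⟩
  rw [hs, finrank_span_eq_card hb2]
  simp

lemma exists_frob (Fq Fqm : Type) [Field Fq] [Field Fqm] [Algebra Fq Fqm] [Finite Fqm] (i : ℕ) :
    ∃ φ : Fqm →ₐ[Fq] Fqm, ∀ x, φ x = x ^ Nat.card Fq ^ i := by
  have := Finite.of_injective _ (FaithfulSMul.algebraMap_injective Fq Fqm)
  have := Fintype.ofFinite Fq
  refine ⟨FiniteField.frobeniusAlgHom Fq Fqm ^ i, fun x => ?_⟩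
  rw [AlgHom.coe_pow, FiniteField.coe_frobeniusAlgHom, pow_iterate, Fintype.card_eq_nat_card]

lemma qpow_mem {Fq Fqm : Type} [Field Fq] [Field Fqm] [Algebra Fq Fqm] [Finite Fqm]
    (M : Submodule Fq (Fin n → Fq)) (i : ℕ) (v : Fin n → Fqm) (hv : v ∈ VL Fqm M) :
    qpowMap (Nat.card Fq) i v ∈ VL Fqm M := by
  obtain ⟨φ, hφ⟩ := exists_frob Fq Fqm i
  have hq : ∀ w : Fin n → Fqm, qpowMap (Nat.card Fq) i w = fun j => φ (w j) := by
    intro w; ext j; simp [qpowMap, hφ]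
  rw [hq]
  unfold VL at hv ⊢
  induction hv using Submodule.span_induction with
  | mem x hx =>
    obtain ⟨y, hy, rfl⟩ := hx
    refine Submodule.subset_span ⟨y, hy, ?_⟩
    ext j
    simp [embFq]
  | zero => 
    convert Submodule.zero_mem _
    simp
  | add x y _ _ hx hy =>
    convert Submodule.add_mem _ hx hy
    simp
  | smul a x _ hx =>
    convert Submodule.smul_mem _ (φ a) hx
    simp

lemma wtRv_le {Fq Fqm : Type} [Field Fq] [Field Fqm] [Algebra Fq Fqm] [Finite Fqm]
    (m : ℕ) (M : Submodule Fq (Fin n → Fq)) (c : Fin n → Fqm) (hc : c ∈ VL Fqm M) :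
    wtRv (Nat.card Fq) m c ≤ finrank Fq M := by
  rw [← finrank_VL (Fqm := Fqm)]
  apply Submodule.finrank_mono
  apply Submodule.span_le.mpr
  intro x hx
  simp only [Set.mem_iUnion] at hx
  obtain ⟨i, _, d, hd, rfl⟩ := hx
  apply qpow_mem
  exact (Submodule.span_le.mpr (Set.singleton_subset_iff.mpr hc)) hd

lemma exists_M {Fq Fqm : Type} [Field Fq] [Field Fqm] [Algebra Fq Fqm] [Finite Fqm]
    (c : Fin n → Fqm) : ∃ M : Submodule Fq (Fin n → Fq), c ∈ VL Fqm M ∧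
      finrank Fq M ≤ wtRv (Nat.card Fq) (finrank Fq Fqm) c := by
  have := Finite.of_injective _ (FaithfulSMul.algebraMap_injective Fq Fqm)
  let T : Fqm →ₗ[Fq] (Fin n → Fq) := LinearMap.pi fun j =>
    (Algebra.trace Fq Fqm).comp (LinearMap.mulRight Fq (c j))
  refine ⟨LinearMap.range T, ?_, ?_⟩
  · let b := Module.finBasis Fq Fqm
    have hc : c = ∑ i, b.traceDual i • embFq Fq Fqm (T (b i)) := by
      ext j
      conv_lhs => rw [← b.traceDual.sum_repr (c j)]
      simp only [Module.Basis.traceDual_repr_apply, Algebra.traceForm_apply, Finset.sum_apply,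
        Pi.smul_apply, smul_eq_mul]
      refine Finset.sum_congr rfl fun i _ => ?_
      simp [embFq, T, Algebra.smul_def, mul_comm]
    rw [hc]
    exact Submodule.sum_mem _ fun i _ => Submodule.smul_mem _ _
      (Submodule.subset_span ⟨_, ⟨_, rfl⟩, rfl⟩)
  · rw [← finrank_VL (Fqm := Fqm)]
    apply Submodule.finrank_mono
    apply Submodule.span_le.mpr
    rintro _ ⟨_, ⟨a, rfl⟩, rfl⟩
    have h : embFq Fq Fqm (T a) = ∑ i ∈ Finset.range (finrank Fq Fqm),
        qpowMap (Nat.card Fq) i (a • c) := by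
      ext j
      simp [embFq, T, qpowMap, FiniteField.algebraMap_trace_eq_sum_pow]
    rw [h]
    refine Submodule.sum_mem _ fun i hi => Submodule.subset_span ?_
    simp only [Set.mem_iUnion]
    exact ⟨i, hi, _, Submodule.smul_mem _ _ (Submodule.mem_span_singleton_self c), rfl⟩

/-- (i) if `ρ < d_R(C)`, every `L ⊆ Fq^n` with `dim L ≥ n − ρ` is an
information space for `C`; (ii) if `d_R(C) ≤ ρ ≤ n`, some `L` with `dim L = n − ρ`
is not an information space for `C`. -/
theorem stmt16 (q m n ρ : ℕ) (Fq Fqm : Type) [Field Fq] [Field Fqm] [Algebra Fq Fqm]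
    [Finite Fqm] (hq : Nat.card Fq = q) (hm : finrank Fq Fqm = m)
    (C : Set (Fin n → Fqm)) (hC : C.Nontrivial) :
    (ρ < dRset q m C →
      ∀ L : Submodule Fq (Fin n → Fq), n - ρ ≤ finrank Fq L →
        ∀ c₁ ∈ C, ∀ c₂ ∈ C, c₁ - c₂ ∈ VL Fqm (perp L) → c₁ = c₂) ∧
    (dRset q m C ≤ ρ → ρ ≤ n →
      ∃ L : Submodule Fq (Fin n → Fq), finrank Fq L = n - ρ ∧
        ∃ c₁ ∈ C, ∃ c₂ ∈ C, c₁ ≠ c₂ ∧ c₁ - c₂ ∈ VL Fqm (perp L)) := by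
  subst hq hm
  constructor
  · intro hρ L hL c₁ h₁ c₂ h₂ hc
    by_contra hne
    have hw := wtRv_le (finrank Fq Fqm) _ _ hc
    rw [finrank_perp] at hw
    have hd : dRset (Nat.card Fq) (finrank Fq Fqm) C ≤ _ :=
      Nat.sInf_le ⟨c₁, h₁, c₂, h₂, hne, rfl⟩
    omega
  · intro hρ hn
    obtain ⟨a, ha, b, hb, hab⟩ := hC
    obtain ⟨c₁, h₁, c₂, h₂, hne, hw⟩ := Nat.sInf_mem
      (s := { w | ∃ c₁ ∈ C, ∃ c₂ ∈ C, c₁ ≠ c₂ ∧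
        w = wtRv (Nat.card Fq) (finrank Fq Fqm) (c₁ - c₂) }) ⟨_, a, ha, b, hb, hab, rfl⟩
    obtain ⟨M, hM, hMr⟩ := exists_M (Fq := Fq) (c₁ - c₂)
    rw [← hw] at hMr
    obtain ⟨L, hL, hLr⟩ := exists_sub (perp M) (n - ρ) (by
      rw [finrank_perp]
      exact Nat.sub_le_sub_left (hMr.trans hρ) n)
    refine ⟨L, hLr, c₁, h₁, c₂, h₂, hne, ?_⟩
    exact Submodule.span_mono (Set.image_mono ((le_perp_perp M).trans (perp_anti hL))) hM

end RankPaper
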